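/- Let φ be a balanced N-function with characteristics (γ₁, γ₂). Then there exist constants c, C > 0, depending only on (γ₁, γ₂), such that for every d, n ≥ 1 and all P, Q ∈ ℝ^{d×n}: c·(φ*)_{|P|}(|P−Q|) ≤ |F*(P)−F*(Q)|² ≤ C·(φ*)_{|P|}(|P−Q|), where (φ*)_{|P|} denotes the shifted N-function of the conjugate φ* with shift |P|. -/

import Mathlib

open Real Filter Set Topology

noncomputable section

/-- An N-function: convex on `[0,∞)`, vanishing at `0`, positive on `(0,∞)`,
with `ψ t / t → 0` as `t → 0⁺` and `ψ t / t → ∞` as `t → ∞`. -/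
def IsNFunction (ψ : ℝ → ℝ) : Prop :=
  ConvexOn ℝ (Set.Ici 0) ψ ∧ ψ 0 = 0 ∧ (∀ t > 0, 0 < ψ t) ∧
    Filter.Tendsto (fun t => ψ t / t) (nhdsWithin 0 (Set.Ioi 0)) (nhds 0) ∧
    Filter.Tendsto (fun t => ψ t / t) Filter.atTop Filter.atTop

/-- A regular N-function: an N-function which is `C¹` on `[0,∞)`, `C²` on `(0,∞)`,
with `ψ'' t > 0` for all `t > 0`. -/
def IsRegularNFunction (ψ : ℝ → ℝ) : Prop :=
  IsNFunction ψ ∧ ContDiffOn ℝ 1 ψ (Set.Ici 0) ∧ ContDiffOn ℝ 2 ψ (Set.Ioi 0) ∧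
    ∀ t > 0, 0 < deriv (deriv ψ) t

/-- A balanced N-function with characteristics `(γ₁, γ₂)`. -/
def IsBalancedNFunction (ψ : ℝ → ℝ) (γ₁ γ₂ : ℝ) : Prop :=
  IsRegularNFunction ψ ∧ 0 < γ₁ ∧ γ₁ ≤ 1 ∧ 1 ≤ γ₂ ∧
    ∀ t > 0, γ₁ * deriv ψ t ≤ t * deriv (deriv ψ) t ∧
      t * deriv (deriv ψ) t ≤ γ₂ * deriv ψ t

/-- The conjugate N-function `ψ*(t) = sup_{s ≥ 0} (s·t − ψ(s))`. -/
def conjNF (ψ : ℝ → ℝ) (t : ℝ) : ℝ :=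
  ⨆ s : Set.Ici (0:ℝ), ((s : ℝ) * t - ψ s)

/-- `ψ` satisfies the Δ₂-condition with constant `K`. -/
def SatisfiesDelta2 (ψ : ℝ → ℝ) (K : ℝ) : Prop :=
  2 < K ∧ ∀ t ≥ (0:ℝ), ψ (2 * t) ≤ K * ψ t

/-- The derivative `ψ'_a(t) = ψ'(a+t)·t/(a+t)` of the shifted N-function. -/
def shiftDF (ψ : ℝ → ℝ) (a t : ℝ) : ℝ := deriv ψ (a + t) * t / (a + t)

/-- The shifted N-function `ψ_a(t) = ∫₀ᵗ ψ'(a+s)·s/(a+s) ds`. -/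
def shiftNF (ψ : ℝ → ℝ) (a t : ℝ) : ℝ := ∫ s in (0:ℝ)..t, shiftDF ψ a s

/-- Frobenius norm of a `d×n` real matrix. -/
def frobNorm {d n : ℕ} (P : Fin d → Fin n → ℝ) : ℝ :=
  Real.sqrt (∑ i : Fin d, ∑ j : Fin n, (P i j) ^ 2)

/-- Frobenius inner product `P : Q` of two `d×n` real matrices. -/
def frobInner {d n : ℕ} (P Q : Fin d → Fin n → ℝ) : ℝ :=
  ∑ i : Fin d, ∑ j : Fin n, P i j * Q i j

/-- `F(P) = √(φ'(|P|)/|P|)·P` (equal to `0` at `P = 0`). -/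
def FmapNF (φ : ℝ → ℝ) {d n : ℕ} (P : Fin d → Fin n → ℝ) : Fin d → Fin n → ℝ :=
  Real.sqrt (deriv φ (frobNorm P) / frobNorm P) • P

/-- `F*(P) = √((φ*)'(|P|)/|P|)·P` (equal to `0` at `P = 0`). -/
def FstarNF (φ : ℝ → ℝ) {d n : ℕ} (P : Fin d → Fin n → ℝ) : Fin d → Fin n → ℝ :=
  Real.sqrt (deriv (conjNF φ) (frobNorm P) / frobNorm P) • P

/-- The standard basis matrix with a `1` in entry `(k,l)`. -/
def basisMat {d n : ℕ} (k : Fin d) (l : Fin n) : Fin d → Fin n → ℝ :=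
  fun i j => if i = k ∧ j = l then 1 else 0

/-- `𝒜` has `φ`-structure with constants `(γ₃, γ₄)`. -/
def HasPhiStructure {d n : ℕ} (A : (Fin d → Fin n → ℝ) → (Fin d → Fin n → ℝ))
    (φ : ℝ → ℝ) (γ₃ γ₄ : ℝ) : Prop :=
  0 < γ₃ ∧ γ₃ ≤ 1 ∧ 1 < γ₄ ∧ Continuous A ∧
    ContDiffOn ℝ 1 A {P | P ≠ 0} ∧ A 0 = 0 ∧
    (∀ P : Fin d → Fin n → ℝ, P ≠ 0 → ∀ Q : Fin d → Fin n → ℝ,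
      γ₃ * (deriv φ (frobNorm P) / frobNorm P) * (frobNorm Q) ^ 2 ≤
        ∑ i : Fin d, ∑ j : Fin n, ∑ k : Fin d, ∑ l : Fin n,
          fderiv ℝ A P (basisMat k l) i j * Q i j * Q k l) ∧
    (∀ P : Fin d → Fin n → ℝ, P ≠ 0 → ∀ (i k : Fin d) (j l : Fin n),
      |fderiv ℝ A P (basisMat k l) i j| ≤ γ₄ * (deriv φ (frobNorm P) / frobNorm P))

/-!
Write `G = (φ*)'`. Since `G` inverts `φ'`, the bound `γ φ' ≤ t φ''` says that `G` is increasing and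
grows at most like the power `1 / γ`. Both sides of the equivalence are then comparable to
`G m / m * ‖x - y‖ ^ 2`, where `m = max ‖x‖ ‖y‖`.

For the shifted N-function with shift `a = ‖x‖` and `δ = ‖x - y‖`, the integrand at `s ≤ δ` lies
between `G (a + δ) / (a + δ) * s` times a power of `s / δ` and its value at `δ`; moreover
`m ≤ a + δ ≤ 3 m`. For the map `F*`, let `‖y‖ ≤ ‖x‖` and `k = √(G ‖x‖ / ‖x‖)`. The vectors
`F* x - F* y` and `k • (x - y)` both have the form `k • x - r • y`, and changing `r` moves such a
vector along `y` only, by an amount which the reverse triangle inequality controls. No inner product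
enters, so the argument works in every real normed space.
-/

section NFunction

variable {φ : ℝ → ℝ} {s t γ : ℝ}

namespace IsRegularNFunction

theorem hasDerivAt (h : IsRegularNFunction φ) (ht : 0 < t) : HasDerivAt φ (deriv φ t) t :=
  ((h.2.2.1.contDiffAt (Ioi_mem_nhds ht)).differentiableAt two_ne_zero).hasDerivAt

theorem hasStrictDerivAt_deriv (h : IsRegularNFunction φ) (ht : 0 < t) :
    HasStrictDerivAt (deriv φ) (deriv (deriv φ) t) t :=
  ((h.2.2.1.deriv_of_isOpen (m := 1) isOpen_Ioi (by norm_num)).contDiffAt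
    (Ioi_mem_nhds ht)).hasStrictDerivAt one_ne_zero

theorem continuousOn_deriv (h : IsRegularNFunction φ) : ContinuousOn (deriv φ) (Ioi 0) :=
  fun _ ht => (h.hasStrictDerivAt_deriv ht).hasDerivAt.continuousAt.continuousWithinAt

theorem strictMonoOn_deriv (h : IsRegularNFunction φ) : StrictMonoOn (deriv φ) (Ioi 0) :=
  strictMonoOn_of_deriv_pos (convex_Ioi 0) h.continuousOn_deriv fun t ht =>
    h.2.2.2 t (interior_subset ht)

theorem tangent_le (h : IsRegularNFunction φ) (ht : 0 < t) (hs : 0 ≤ s) :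
    φ t + deriv φ t * (s - t) ≤ φ s := by
  rcases lt_trichotomy s t with hst | rfl | hst
  · have hslope := h.1.1.slope_le_of_hasDerivAt hs ht.le hst (h.hasDerivAt ht)
    rw [slope_def_field, div_le_iff₀ (sub_pos.2 hst)] at hslope
    linarith
  · simp only [sub_self, mul_zero, add_zero, le_refl]
  · have hslope := h.1.1.le_slope_of_hasDerivAt ht.le hs hst (h.hasDerivAt ht)
    rw [slope_def_field, le_div_iff₀ (sub_pos.2 hst)] at hslope
    linarith

theorem div_le_deriv (h : IsRegularNFunction φ) (ht : 0 < t) : φ t / t ≤ deriv φ t := by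
  have htangent := h.tangent_le ht le_rfl
  rw [h.1.2.1] at htangent
  rw [div_le_iff₀ ht]
  linarith

theorem deriv_le_div (h : IsRegularNFunction φ) (ht : 0 < t) : deriv φ t ≤ φ (2 * t) / t := by
  have htangent := h.tangent_le ht (s := 2 * t) (by positivity)
  have hpos := h.1.2.2.1 t ht
  rw [le_div_iff₀ ht]
  linarith

theorem deriv_pos (h : IsRegularNFunction φ) (ht : 0 < t) : 0 < deriv φ t :=
  (div_pos (h.1.2.2.1 t ht) ht).trans_le (h.div_le_deriv ht)

theorem tendsto_deriv_atTop (h : IsRegularNFunction φ) : Tendsto (deriv φ) atTop atTop :=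
  tendsto_atTop_mono' atTop
    ((eventually_gt_atTop 0).mono fun _ ht => h.div_le_deriv ht) h.1.2.2.2.2

theorem tendsto_deriv_zero (h : IsRegularNFunction φ) : Tendsto (deriv φ) (𝓝[>] 0) (𝓝 0) := by
  have hdouble : Tendsto (fun t : ℝ => 2 * t) (𝓝[>] 0) (𝓝[>] 0) := by
    refine tendsto_nhdsWithin_iff.2 ⟨?_, eventually_mem_nhdsWithin.mono fun t ht => ?_⟩
    · exact ((continuous_const_mul (2 : ℝ)).tendsto' 0 0 (mul_zero 2)).mono_left
        nhdsWithin_le_nhds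
    · exact mul_pos two_pos (mem_Ioi.1 ht)
  have hbound : Tendsto (fun t => 2 * (φ (2 * t) / (2 * t))) (𝓝[>] 0) (𝓝 0) := by
    simpa only [mul_zero, Function.comp_apply] using (h.1.2.2.2.1.comp hdouble).const_mul 2
  refine tendsto_of_tendsto_of_tendsto_of_le_of_le' tendsto_const_nhds hbound
    (eventually_mem_nhdsWithin.mono fun t ht => (h.deriv_pos ht).le)
    (eventually_mem_nhdsWithin.mono fun t ht => (h.deriv_le_div ht).trans_eq ?_)
  rw [← mul_div_assoc, mul_div_mul_left _ _ two_ne_zero]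

theorem surjOn_deriv (h : IsRegularNFunction φ) : SurjOn (deriv φ) (Ioi 0) (Ioi 0) :=
  isPreconnected_Ioi.intermediate_value_Ioi (l₁ := 𝓝[>] (0 : ℝ)) inf_le_right
    (le_principal_iff.2 (Ioi_mem_atTop 0)) h.continuousOn_deriv h.tendsto_deriv_zero
    h.tendsto_deriv_atTop

theorem conjNF_deriv (h : IsRegularNFunction φ) (ht : 0 < t) :
    conjNF φ (deriv φ t) = t * deriv φ t - φ t := by
  refine IsGreatest.csSup_eq ⟨⟨⟨t, ht.le⟩, rfl⟩, ?_⟩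
  rintro _ ⟨⟨s, hs⟩, rfl⟩
  have := h.tangent_le ht hs
  linarith

-- By the two tangent inequalities, the first-order remainder of `φ*` between `φ' t` and `φ' r`
-- lies between `0` and `(r - t) (φ' r - φ' t)`.
theorem hasDerivAt_conjNF (h : IsRegularNFunction φ) (ht : 0 < t) :
    HasDerivAt (conjNF φ) t (deriv φ t) := by
  have hstrict := h.hasStrictDerivAt_deriv ht
  rw [hasDerivAt_iff_isLittleO, ← hstrict.map_nhds_eq (h.2.2.2 t ht).ne',
    Asymptotics.isLittleO_map]
  have hsub : (fun r => r - t) =o[𝓝 t] fun _ => (1 : ℝ) :=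
    (Asymptotics.isLittleO_one_iff ℝ).2 (tendsto_sub_nhds_zero_iff.2 tendsto_id)
  have hprod := hsub.mul_isBigO (Asymptotics.isBigO_refl (fun r => deriv φ r - deriv φ t) (𝓝 t))
  simp only [one_mul] at hprod
  refine Asymptotics.IsBigO.trans_isLittleO (.of_bound' ?_) hprod
  filter_upwards [Ioi_mem_nhds ht] with r hr
  have htangent_t := h.tangent_le ht (le_of_lt hr)
  have htangent_r := h.tangent_le hr ht.le
  simp only [Function.comp_apply, h.conjNF_deriv hr, h.conjNF_deriv ht, smul_eq_mul,
    Real.norm_eq_abs]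
  rw [abs_of_nonneg (by linarith)]
  exact le_trans (by linarith) (le_abs_self _)

theorem deriv_conjNF_deriv (h : IsRegularNFunction φ) (ht : 0 < t) :
    deriv (conjNF φ) (deriv φ t) = t :=
  (h.hasDerivAt_conjNF ht).deriv

end IsRegularNFunction

/-- Regular N-functions satisfying the lower of the two bounds that define a balanced N-function;
by duality it limits the growth of `(φ*)'`. -/
structure IsLowerBalancedNFunction (φ : ℝ → ℝ) (γ : ℝ) : Prop where
  regular : IsRegularNFunction φ
  pos : 0 < γ
  mul_deriv_le : ∀ t > 0, γ * deriv φ t ≤ t * deriv (deriv φ) t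

theorem IsBalancedNFunction.isLowerBalancedNFunction {γ₁ γ₂ : ℝ}
    (h : IsBalancedNFunction φ γ₁ γ₂) : IsLowerBalancedNFunction φ γ₁ :=
  ⟨h.1, h.2.1, fun t ht => (h.2.2.2.2 t ht).1⟩

theorem IsLowerBalancedNFunction.monotoneOn_deriv_mul_rpow (h : IsLowerBalancedNFunction φ γ) :
    MonotoneOn (fun t => deriv φ t * t ^ (-γ)) (Ioi 0) := by
  have hderiv : ∀ t > 0, HasDerivAt (fun t => deriv φ t * t ^ (-γ))
      (deriv (deriv φ) t * t ^ (-γ) + deriv φ t * (-γ * t ^ (-γ - 1))) t := fun t ht =>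
    (h.regular.hasStrictDerivAt_deriv ht).hasDerivAt.mul
      (Real.hasDerivAt_rpow_const (Or.inl ht.ne'))
  refine monotoneOn_of_hasDerivWithinAt_nonneg (convex_Ioi 0)
    (fun t ht => (hderiv t ht).continuousAt.continuousWithinAt)
    (fun t ht => (hderiv t (interior_subset ht)).hasDerivWithinAt) fun t ht => ?_
  have ht : 0 < t := interior_subset ht
  have hfactor : deriv (deriv φ) t * t ^ (-γ) + deriv φ t * (-γ * t ^ (-γ - 1)) =
      (t * deriv (deriv φ) t - γ * deriv φ t) * t ^ (-γ - 1) := by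
    rw [Real.rpow_sub_one ht.ne']
    field_simp
    ring
  rw [hfactor]
  exact mul_nonneg (sub_nonneg.2 (h.mul_deriv_le t ht)) (Real.rpow_nonneg ht.le _)

theorem IsLowerBalancedNFunction.div_rpow_mul_deriv_le (h : IsLowerBalancedNFunction φ γ)
    (hs : 0 < s) (hst : s ≤ t) : (t / s) ^ γ * deriv φ s ≤ deriv φ t := by
  have ht : 0 < t := hs.trans_le hst
  have hmono := h.monotoneOn_deriv_mul_rpow hs ht hst
  simp only [Real.rpow_neg ht.le, Real.rpow_neg hs.le, ← div_eq_mul_inv] at hmono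
  rwa [le_div_iff₀ (by positivity), div_mul_comm, ← Real.div_rpow ht.le hs.le] at hmono

/-- Positive nondecreasing functions on `(0, ∞)` that grow at most like the power `p`: the
condition satisfied by the derivative of an N-function of upper index `p + 1`. -/
structure PowerGrowth (G : ℝ → ℝ) (p : ℝ) : Prop where
  pos : ∀ {u}, 0 < u → 0 < G u
  mono : ∀ {u v}, 0 < u → u ≤ v → G u ≤ G v
  le_rpow_mul : ∀ {u v}, 0 < u → u ≤ v → G v ≤ (v / u) ^ p * G u

theorem IsLowerBalancedNFunction.powerGrowth_deriv_conjNF (h : IsLowerBalancedNFunction φ γ) :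
    PowerGrowth (deriv (conjNF φ)) γ⁻¹ := by
  have hle_iff {s t : ℝ} (hs : 0 < s) (ht : 0 < t) : deriv φ s ≤ deriv φ t ↔ s ≤ t :=
    h.regular.strictMonoOn_deriv.le_iff_le hs ht
  have hinv {t : ℝ} (ht : 0 < t) := h.regular.deriv_conjNF_deriv ht
  refine ⟨fun {u} hu => ?_, fun {u v} hu huv => ?_, fun {u v} hu huv => ?_⟩
  · obtain ⟨s, hs, rfl⟩ := h.regular.surjOn_deriv hu
    rwa [hinv hs]
  all_goals
    obtain ⟨s, hs, rfl⟩ := h.regular.surjOn_deriv hu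
    obtain ⟨t, ht, rfl⟩ := h.regular.surjOn_deriv (hu.trans_le huv)
    rw [hinv hs, hinv ht]
    have hst : s ≤ t := (hle_iff hs ht).1 huv
  · exact hst
  · have hs : 0 < s := hs
    have ht : 0 < t := ht
    have hv : 0 < deriv φ t := hu.trans_le huv
    rw [← div_le_iff₀ hs,
      Real.le_rpow_inv_iff_of_pos (by positivity) (by positivity) h.pos, le_div_iff₀ hu]
    exact h.div_rpow_mul_deriv_le hs hst

end NFunction

namespace PowerGrowth

variable {G : ℝ → ℝ} {a b m p v K : ℝ}

theorem exponent_nonneg (h : PowerGrowth G p) : 0 ≤ p := by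
  have hone : 1 * G 1 ≤ 2 ^ p * G 1 := by
    simpa only [div_one, one_mul] using
      (h.mono one_pos one_le_two).trans (h.le_rpow_mul one_pos one_le_two)
  by_contra! hp
  exact (Real.rpow_lt_one_of_one_lt_of_neg one_lt_two hp).not_ge
    (le_of_mul_le_mul_right hone (h.pos one_pos))

theorem mul_le_div_mul (h : PowerGrowth G p) (hb : 0 ≤ b) (ha : 0 < a) (hba : b ≤ a) :
    b * G b ≤ b / a * (a * G a) := by
  rw [← mul_assoc, div_mul_cancel₀ b ha.ne']
  rcases hb.eq_or_lt with rfl | hb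
  · simp only [zero_mul, le_refl]
  · exact mul_le_mul_of_nonneg_left (h.mono hb hba) hb.le

theorem div_rpow_mul_le (h : PowerGrowth G p) (hb : 0 ≤ b) (ha : 0 < a) (hba : b ≤ a) :
    (b / a) ^ (p + 1) * (a * G a) ≤ b * G b := by
  rcases hb.eq_or_lt with rfl | hb
  · rw [zero_div, Real.zero_rpow (by linarith [h.exponent_nonneg]), zero_mul, zero_mul]
  calc (b / a) ^ (p + 1) * (a * G a) = b * ((b / a) ^ p * G a) := by
        rw [Real.rpow_add_one (by positivity)]
        field_simp
    _ ≤ b * ((b / a) ^ p * ((a / b) ^ p * G b)) := by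
        gcongr
        exact h.le_rpow_mul hb hba
    _ = b * G b := by
        rw [← mul_assoc ((b / a) ^ p), ← Real.mul_rpow (by positivity) (by positivity),
          div_mul_div_cancel₀ ha.ne', div_self hb.ne', Real.one_rpow, one_mul]

theorem self_mul_nonneg (h : PowerGrowth G p) (ha : 0 ≤ a) : 0 ≤ a * G a := by
  rcases ha.eq_or_lt with rfl | ha
  · simp only [zero_mul, le_refl]
  · exact (mul_pos ha (h.pos ha)).le

theorem sqrt_mul_le (h : PowerGrowth G p) (hb : 0 ≤ b) (ha : 0 < a) (hba : b ≤ a) :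
    √(b * G b) ≤ √(a * G a) := by
  refine Real.sqrt_le_sqrt ((h.mul_le_div_mul hb ha hba).trans ?_)
  exact mul_le_of_le_one_left (h.self_mul_nonneg ha.le) ((div_le_one ha).2 hba)

-- Bernoulli's inequality turns the power bound into a linear one.
theorem sqrt_mul_sub_le (h : PowerGrowth G p) (hb : 0 ≤ b) (ha : 0 < a) (hba : b ≤ a) :
    √(a * G a) - √(b * G b) ≤ (p + 1) * (√(a * G a) * (1 - b / a)) := by
  have hH : 0 < √(a * G a) := Real.sqrt_pos.2 (mul_pos ha (h.pos ha))
  have hbernoulli : 1 - (p + 1) * (1 - b / a) ≤ (b / a) ^ (p + 1) := by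
    have := one_add_mul_self_le_rpow_one_add (s := b / a - 1) (p := p + 1)
      (by linarith [div_nonneg hb ha.le]) (by linarith [h.exponent_nonneg])
    rw [add_sub_cancel] at this
    linarith
  have hpow : (b / a) ^ (p + 1) * √(a * G a) ≤ √(b * G b) := by
    refine le_of_mul_le_mul_right ?_ hH
    calc (b / a) ^ (p + 1) * √(a * G a) * √(a * G a) = (b / a) ^ (p + 1) * (a * G a) := by
          rw [mul_assoc, Real.mul_self_sqrt (h.self_mul_nonneg ha.le)]
      _ ≤ b * G b := h.div_rpow_mul_le hb ha hba
      _ = √(b * G b) * √(b * G b) := (Real.mul_self_sqrt (h.self_mul_nonneg hb)).symm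
      _ ≤ √(b * G b) * √(a * G a) :=
          mul_le_mul_of_nonneg_left (h.sqrt_mul_le hb ha hba) (Real.sqrt_nonneg _)
  linarith [mul_le_mul_of_nonneg_right hbernoulli hH.le]

theorem sqrt_mul_one_sub_div_le (h : PowerGrowth G p) (hb : 0 ≤ b) (ha : 0 < a) (hba : b ≤ a) :
    √(a * G a) * (1 - b / a) ≤ 2 * (√(a * G a) - √(b * G b)) := by
  have hH : 0 < √(a * G a) := Real.sqrt_pos.2 (mul_pos ha (h.pos ha))
  have hle := h.sqrt_mul_le hb ha hba
  have hsq_a := Real.mul_self_sqrt (h.self_mul_nonneg ha.le)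
  have hsq_b := Real.mul_self_sqrt (h.self_mul_nonneg hb)
  refine le_of_mul_le_mul_right ?_ hH
  calc √(a * G a) * (1 - b / a) * √(a * G a) = a * G a - b / a * (a * G a) := by
        rw [mul_right_comm, hsq_a]; ring
    _ ≤ a * G a - b * G b := sub_le_sub_left (h.mul_le_div_mul hb ha hba) _
    _ = (√(a * G a) - √(b * G b)) * (√(a * G a) + √(b * G b)) := by
        linear_combination hsq_b - hsq_a
    _ ≤ (√(a * G a) - √(b * G b)) * (2 * √(a * G a)) := by gcongr; linarith
    _ = 2 * (√(a * G a) - √(b * G b)) * √(a * G a) := by ring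

theorem div_self_le_mul (h : PowerGrowth G p) (hm : 0 < m) (hmv : m ≤ v) (hv : v ≤ K * m) :
    G m / m ≤ K * (G v / v) := by
  have hv_pos : 0 < v := hm.trans_le hmv
  have hGv := h.pos hv_pos
  rw [← mul_div_assoc, div_le_div_iff₀ hm hv_pos]
  calc G m * v ≤ G v * (K * m) := by gcongr; exact h.mono hm hmv
    _ = K * G v * m := by ring

theorem div_self_le_rpow_mul (h : PowerGrowth G p) (hm : 0 < m) (hmv : m ≤ v) (hv : v ≤ K * m) :
    G v / v ≤ K ^ p * (G m / m) := by
  have hGm := h.pos hm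
  have hv_pos : 0 < v := hm.trans_le hmv
  have hratio : v / m ≤ K := (div_le_iff₀ hm).2 hv
  calc G v / v ≤ (v / m) ^ p * G m / v := by gcongr; exact h.le_rpow_mul hm hmv
    _ ≤ K ^ p * G m / m := by
        have := h.exponent_nonneg
        have : 0 < K := (div_pos hv_pos hm).trans_le hratio
        gcongr
    _ = K ^ p * (G m / m) := mul_div_assoc _ _ _

end PowerGrowth

section Shift

variable {ψ : ℝ → ℝ} {a p s δ : ℝ}

theorem PowerGrowth.monotoneOn_shiftDF (h : PowerGrowth (deriv ψ) p) (ha : 0 ≤ a) :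
    MonotoneOn (shiftDF ψ a) (Ici 0) := by
  intro s hs t ht hst
  rcases (mem_Ici.1 hs).eq_or_lt with rfl | hs
  · rw [shiftDF, mul_zero, zero_div, shiftDF, mul_div_right_comm]
    rcases (mem_Ici.1 ht).eq_or_lt with rfl | ht
    · rw [mul_zero]
    · have := h.pos (add_pos_of_nonneg_of_pos ha ht)
      positivity
  · have ht : 0 < t := hs.trans_le hst
    have hderiv : deriv ψ (a + s) ≤ deriv ψ (a + t) := h.mono (by positivity) (by gcongr)
    have hfrac : s / (a + s) ≤ t / (a + t) := by
      rw [div_le_div_iff₀ (by positivity) (by positivity)]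
      linarith [mul_le_mul_of_nonneg_right hst ha]
    have := h.pos (add_pos_of_nonneg_of_pos ha ht)
    simp only [shiftDF, mul_div_assoc]
    gcongr

theorem PowerGrowth.intervalIntegrable_shiftDF (h : PowerGrowth (deriv ψ) p) (ha : 0 ≤ a)
    (hδ : 0 ≤ δ) : IntervalIntegrable (shiftDF ψ a) MeasureTheory.volume 0 δ :=
  ((h.monotoneOn_shiftDF ha).mono (uIcc_of_le hδ ▸ Icc_subset_Ici_self)).intervalIntegrable

theorem PowerGrowth.shiftNF_le (h : PowerGrowth (deriv ψ) p) (ha : 0 ≤ a) (hδ : 0 ≤ δ) :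
    shiftNF ψ a δ ≤ deriv ψ (a + δ) / (a + δ) * δ ^ 2 := by
  calc shiftNF ψ a δ ≤ ∫ _ in (0 : ℝ)..δ, shiftDF ψ a δ :=
        intervalIntegral.integral_mono_on hδ (h.intervalIntegrable_shiftDF ha hδ)
          intervalIntegrable_const fun s hs => h.monotoneOn_shiftDF ha hs.1 hδ hs.2
    _ = deriv ψ (a + δ) / (a + δ) * δ ^ 2 := by
        rw [intervalIntegral.integral_const, smul_eq_mul, shiftDF]
        ring

theorem PowerGrowth.mul_rpow_le_shiftDF (h : PowerGrowth (deriv ψ) p) (ha : 0 ≤ a) (hs : 0 < s)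
    (hsδ : s ≤ δ) :
    deriv ψ (a + δ) / (a + δ) * (s / δ) ^ p * s ≤ shiftDF ψ a s := by
  have hδ : 0 < δ := hs.trans_le hsδ
  have hpos := h.pos (add_pos_of_nonneg_of_pos ha hs)
  have hratio : (a + δ) / (a + s) ≤ δ / s := by
    rw [div_le_div_iff₀ (by positivity) hs]
    linarith [mul_le_mul_of_nonneg_left hsδ ha]
  have hderiv : deriv ψ (a + δ) * (s / δ) ^ p ≤ deriv ψ (a + s) := by
    rw [← inv_div δ s, Real.inv_rpow (by positivity), ← div_eq_mul_inv,
      div_le_iff₀ (by positivity), mul_comm]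
    calc deriv ψ (a + δ) ≤ ((a + δ) / (a + s)) ^ p * deriv ψ (a + s) :=
          h.le_rpow_mul (by positivity) (by gcongr)
      _ ≤ (δ / s) ^ p * deriv ψ (a + s) := by gcongr; exact h.exponent_nonneg
  calc deriv ψ (a + δ) / (a + δ) * (s / δ) ^ p * s
      = deriv ψ (a + δ) * (s / δ) ^ p * s / (a + δ) := by ring
    _ ≤ deriv ψ (a + s) * s / (a + s) := by gcongr

theorem integral_div_rpow_mul_self (hp : 0 ≤ p) (hδ : 0 < δ) :
    ∫ s in (0 : ℝ)..δ, (s / δ) ^ p * s = δ ^ 2 / (p + 2) := by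
  have hintegrand : EqOn (fun s => (s / δ) ^ p * s) (fun s => (δ ^ p)⁻¹ * s ^ (p + 1))
      (uIcc 0 δ) := by
    intro s hs
    rw [uIcc_of_le hδ.le] at hs
    simp only [Real.div_rpow hs.1 hδ.le, Real.rpow_add_one' hs.1 (by positivity : p + 1 ≠ 0)]
    ring
  rw [intervalIntegral.integral_congr hintegrand, intervalIntegral.integral_const_mul,
    integral_rpow (Or.inl (by linarith)), Real.zero_rpow (by positivity), sub_zero,
    add_assoc, one_add_one_eq_two, Real.rpow_add hδ, Real.rpow_two]
  field_simp

theorem PowerGrowth.mul_sq_le_shiftNF (h : PowerGrowth (deriv ψ) p) (ha : 0 ≤ a) (hδ : 0 < δ) :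
    deriv ψ (a + δ) / (a + δ) * δ ^ 2 ≤ (p + 2) * shiftNF ψ a δ := by
  have hp := h.exponent_nonneg
  set κ := deriv ψ (a + δ) / (a + δ)
  have hcont : Continuous fun s => κ * ((s / δ) ^ p * s) := by fun_prop (disch := assumption)
  rw [← div_le_iff₀' (by positivity), mul_div_assoc, ← integral_div_rpow_mul_self hp hδ,
    ← intervalIntegral.integral_const_mul]
  refine intervalIntegral.integral_mono_on hδ.le (hcont.intervalIntegrable 0 δ)
    (h.intervalIntegrable_shiftDF ha hδ.le) fun s hs => ?_
  rcases hs.1.eq_or_lt with rfl | hs_pos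
  · rw [shiftDF, mul_zero, mul_zero, mul_zero, zero_div]
  · rw [← mul_assoc]
    exact h.mul_rpow_le_shiftDF ha hs_pos hs.2

end Shift

section NormedSpace

variable {E : Type*} [NormedAddCommGroup E]

theorem max_norm_pos {x y : E} (hxy : x ≠ y) : 0 < max ‖x‖ ‖y‖ := by
  by_contra! hmax
  obtain ⟨hx, hy⟩ := max_le_iff.1 hmax
  exact hxy ((norm_le_zero_iff.1 hx).trans (norm_le_zero_iff.1 hy).symm)

theorem max_norm_le_norm_add_norm_sub (x y : E) : max ‖x‖ ‖y‖ ≤ ‖x‖ + ‖x - y‖ :=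
  max_le (le_add_of_nonneg_right (norm_nonneg _)) (norm_le_norm_add_norm_sub x y)

theorem norm_add_norm_sub_le_three_mul_max (x y : E) : ‖x‖ + ‖x - y‖ ≤ 3 * max ‖x‖ ‖y‖ := by
  linarith [norm_sub_le x y, le_max_left ‖x‖ ‖y‖, le_max_right ‖x‖ ‖y‖]

variable [NormedSpace ℝ E]

theorem norm_sub_smul_le_mul_norm_sub_smul {u z : E} {r s A : ℝ} (hs : 0 ≤ s) (hru : r * ‖z‖ ≤ ‖u‖)
    (hsu : s * ‖z‖ ≤ ‖u‖) (hA : 1 ≤ A) (hrs : ‖u‖ - r * ‖z‖ ≤ A * (‖u‖ - s * ‖z‖)) :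
    ‖u - r • z‖ ≤ (1 + A) * ‖u - s • z‖ := by
  have hreverse : ‖u‖ - s * ‖z‖ ≤ ‖u - s • z‖ := by
    simpa only [norm_smul, Real.norm_of_nonneg hs] using norm_sub_norm_le u (s • z)
  have hparallel : ‖s • z - r • z‖ ≤ A * (‖u‖ - s * ‖z‖) := by
    rw [← sub_smul, norm_smul, Real.norm_eq_abs, ← abs_norm z, ← abs_mul, abs_norm, sub_mul,
      abs_le]
    have := le_mul_of_one_le_left (sub_nonneg.2 hsu) hA
    constructor <;> linarith
  calc ‖u - r • z‖ ≤ ‖u - s • z‖ + ‖s • z - r • z‖ := norm_sub_le_norm_sub_add_norm_sub _ _ _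
    _ ≤ ‖u - s • z‖ + A * ‖u - s • z‖ := by gcongr; exact hparallel.trans (by gcongr)
    _ = (1 + A) * ‖u - s • z‖ := by ring

theorem norm_sqrt_smul_sq {c : ℝ} (hc : 0 ≤ c) (x : E) : ‖√c • x‖ ^ 2 = c * ‖x‖ ^ 2 := by
  rw [norm_smul, mul_pow, Real.norm_of_nonneg (Real.sqrt_nonneg _), Real.sq_sqrt hc]

/-- The map `x ↦ √(G ‖x‖ / ‖x‖) x`, which is the map `F*` of the theorem when `G = (φ*)'`. -/
def sqrtRadialMap (G : ℝ → ℝ) (x : E) : E := √(G ‖x‖ / ‖x‖) • x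

theorem norm_sqrtRadialMap' (G : ℝ → ℝ) (x : E) :
    ‖sqrtRadialMap G x‖ = √(G ‖x‖ / ‖x‖) * ‖x‖ := by
  rw [sqrtRadialMap, norm_smul, Real.norm_of_nonneg (Real.sqrt_nonneg _)]

theorem norm_sqrtRadialMap (G : ℝ → ℝ) (x : E) : ‖sqrtRadialMap G x‖ = √(‖x‖ * G ‖x‖) := by
  rw [norm_sqrtRadialMap']
  rcases (norm_nonneg x).eq_or_lt with hx | hx
  · rw [← hx, mul_zero, zero_mul, Real.sqrt_zero]
  · nth_rw 3 [← Real.sqrt_sq hx.le]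
    rw [← Real.sqrt_mul' _ (sq_nonneg _)]
    congr 1
    field_simp

theorem sqrt_div_norm_mul (G : ℝ → ℝ) {x : E} (hx : 0 < ‖x‖) (b : ℝ) :
    √(G ‖x‖ / ‖x‖) * b = √(‖x‖ * G ‖x‖) * (b / ‖x‖) := by
  rw [← norm_sqrtRadialMap, norm_sqrtRadialMap']
  field_simp

theorem sqrt_div_norm_mul_le_norm (G : ℝ → ℝ) {x : E} {b : ℝ} (hb : b ≤ ‖x‖) :
    √(G ‖x‖ / ‖x‖) * b ≤ ‖sqrtRadialMap G x‖ := by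
  rw [norm_sqrtRadialMap']
  gcongr

namespace PowerGrowth

variable {G ψ : ℝ → ℝ} {p : ℝ} {x y : E}

theorem norm_sqrtRadialMap_le (h : PowerGrowth G p) (hx : 0 < ‖x‖) (hyx : ‖y‖ ≤ ‖x‖) :
    ‖sqrtRadialMap G y‖ ≤ ‖sqrtRadialMap G x‖ := by
  simpa only [norm_sqrtRadialMap] using h.sqrt_mul_le (norm_nonneg y) hx hyx

theorem norm_sqrtRadialMap_sub_le (h : PowerGrowth G p) (hx : 0 < ‖x‖) (hyx : ‖y‖ ≤ ‖x‖) :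
    ‖sqrtRadialMap G x - sqrtRadialMap G y‖ ≤ (p + 2) * ‖√(G ‖x‖ / ‖x‖) • (x - y)‖ := by
  have hgap : ‖sqrtRadialMap G x‖ - √(G ‖y‖ / ‖y‖) * ‖y‖ ≤
      (p + 1) * (‖sqrtRadialMap G x‖ - √(G ‖x‖ / ‖x‖) * ‖y‖) := by
    rw [← norm_sqrtRadialMap', sqrt_div_norm_mul G hx, norm_sqrtRadialMap, norm_sqrtRadialMap,
      ← mul_one_sub]
    exact h.sqrt_mul_sub_le (norm_nonneg y) hx hyx
  have hcompare := norm_sub_smul_le_mul_norm_sub_smul (Real.sqrt_nonneg _)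
    ((norm_sqrtRadialMap' G y).symm.trans_le (h.norm_sqrtRadialMap_le hx hyx))
    (sqrt_div_norm_mul_le_norm G hyx) (by linarith [h.exponent_nonneg]) hgap
  rw [smul_sub]
  exact hcompare.trans_eq (by rw [sqrtRadialMap]; ring)

theorem norm_smul_sub_le (h : PowerGrowth G p) (hx : 0 < ‖x‖) (hyx : ‖y‖ ≤ ‖x‖) :
    ‖√(G ‖x‖ / ‖x‖) • (x - y)‖ ≤ 3 * ‖sqrtRadialMap G x - sqrtRadialMap G y‖ := by
  have hgap : ‖sqrtRadialMap G x‖ - √(G ‖x‖ / ‖x‖) * ‖y‖ ≤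
      2 * (‖sqrtRadialMap G x‖ - √(G ‖y‖ / ‖y‖) * ‖y‖) := by
    rw [← norm_sqrtRadialMap', sqrt_div_norm_mul G hx, norm_sqrtRadialMap, norm_sqrtRadialMap,
      ← mul_one_sub]
    exact h.sqrt_mul_one_sub_div_le (norm_nonneg y) hx hyx
  have hcompare := norm_sub_smul_le_mul_norm_sub_smul (Real.sqrt_nonneg _)
    (sqrt_div_norm_mul_le_norm G hyx)
    ((norm_sqrtRadialMap' G y).symm.trans_le (h.norm_sqrtRadialMap_le hx hyx)) one_le_two hgap
  rw [smul_sub]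
  exact hcompare.trans_eq (by norm_num [sqrtRadialMap])

theorem norm_sqrtRadialMap_sub_sq_le (h : PowerGrowth G p) (hm : 0 < max ‖x‖ ‖y‖) :
    ‖sqrtRadialMap G x - sqrtRadialMap G y‖ ^ 2 ≤
      (p + 2) ^ 2 * (G (max ‖x‖ ‖y‖) / max ‖x‖ ‖y‖ * ‖x - y‖ ^ 2) := by
  wlog hyx : ‖y‖ ≤ ‖x‖ generalizing x y
  · rw [max_comm, norm_sub_rev, norm_sub_rev x]
    exact this (by rwa [max_comm]) (le_of_not_ge hyx)
  rw [max_eq_left hyx] at hm ⊢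
  rw [← norm_sqrt_smul_sq (div_pos (h.pos hm) hm).le, ← mul_pow]
  exact pow_le_pow_left₀ (norm_nonneg _) (h.norm_sqrtRadialMap_sub_le hm hyx) 2

theorem div_mul_norm_sub_sq_le (h : PowerGrowth G p) (hm : 0 < max ‖x‖ ‖y‖) :
    G (max ‖x‖ ‖y‖) / max ‖x‖ ‖y‖ * ‖x - y‖ ^ 2 ≤
      9 * ‖sqrtRadialMap G x - sqrtRadialMap G y‖ ^ 2 := by
  wlog hyx : ‖y‖ ≤ ‖x‖ generalizing x y
  · rw [max_comm, norm_sub_rev, norm_sub_rev (sqrtRadialMap G x)]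
    exact this (by rwa [max_comm]) (le_of_not_ge hyx)
  rw [max_eq_left hyx] at hm ⊢
  rw [← norm_sqrt_smul_sq (div_pos (h.pos hm) hm).le]
  calc ‖√(G ‖x‖ / ‖x‖) • (x - y)‖ ^ 2
      ≤ (3 * ‖sqrtRadialMap G x - sqrtRadialMap G y‖) ^ 2 := by
        gcongr
        exact h.norm_smul_sub_le hm hyx
    _ = 9 * ‖sqrtRadialMap G x - sqrtRadialMap G y‖ ^ 2 := by ring

theorem shiftNF_le_mul_norm_sub_sq (h : PowerGrowth (deriv ψ) p) :
    shiftNF ψ ‖x‖ ‖x - y‖ ≤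
      9 * 3 ^ p * ‖sqrtRadialMap (deriv ψ) x - sqrtRadialMap (deriv ψ) y‖ ^ 2 := by
  rcases eq_or_ne x y with rfl | hxy
  · simp [shiftNF]
  have hm := max_norm_pos hxy
  calc shiftNF ψ ‖x‖ ‖x - y‖
      ≤ deriv ψ (‖x‖ + ‖x - y‖) / (‖x‖ + ‖x - y‖) * ‖x - y‖ ^ 2 :=
        h.shiftNF_le (norm_nonneg _) (norm_nonneg _)
    _ ≤ 3 ^ p * (deriv ψ (max ‖x‖ ‖y‖) / max ‖x‖ ‖y‖) * ‖x - y‖ ^ 2 := by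
        gcongr
        exact h.div_self_le_rpow_mul hm (max_norm_le_norm_add_norm_sub x y)
          (norm_add_norm_sub_le_three_mul_max x y)
    _ ≤ 3 ^ p * (9 * ‖sqrtRadialMap (deriv ψ) x - sqrtRadialMap (deriv ψ) y‖ ^ 2) := by
        rw [mul_assoc]
        gcongr 3 ^ p * ?_
        exact h.div_mul_norm_sub_sq_le hm
    _ = 9 * 3 ^ p * ‖sqrtRadialMap (deriv ψ) x - sqrtRadialMap (deriv ψ) y‖ ^ 2 := by ring

theorem norm_sub_sq_le_mul_shiftNF (h : PowerGrowth (deriv ψ) p) :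
    ‖sqrtRadialMap (deriv ψ) x - sqrtRadialMap (deriv ψ) y‖ ^ 2 ≤
      3 * (p + 2) ^ 3 * shiftNF ψ ‖x‖ ‖x - y‖ := by
  rcases eq_or_ne x y with rfl | hxy
  · simp [shiftNF]
  have hm := max_norm_pos hxy
  have hp := h.exponent_nonneg
  calc ‖sqrtRadialMap (deriv ψ) x - sqrtRadialMap (deriv ψ) y‖ ^ 2
      ≤ (p + 2) ^ 2 * (deriv ψ (max ‖x‖ ‖y‖) / max ‖x‖ ‖y‖ * ‖x - y‖ ^ 2) :=
        h.norm_sqrtRadialMap_sub_sq_le hm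
    _ ≤ (p + 2) ^ 2 *
          (3 * (deriv ψ (‖x‖ + ‖x - y‖) / (‖x‖ + ‖x - y‖)) * ‖x - y‖ ^ 2) := by
        gcongr
        exact h.div_self_le_mul hm (max_norm_le_norm_add_norm_sub x y)
          (norm_add_norm_sub_le_three_mul_max x y)
    _ ≤ (p + 2) ^ 2 * (3 * ((p + 2) * shiftNF ψ ‖x‖ ‖x - y‖)) := by
        rw [mul_assoc 3]
        gcongr (p + 2) ^ 2 * (3 * ?_)
        exact h.mul_sq_le_shiftNF (norm_nonneg _) (norm_pos_iff.2 (sub_ne_zero.2 hxy))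
    _ = 3 * (p + 2) ^ 3 * shiftNF ψ ‖x‖ ‖x - y‖ := by ring

end PowerGrowth

theorem Fstar_equiv_shift_conj_general (γ : ℝ) :
    ∃ c > (0 : ℝ), ∃ C > (0 : ℝ), ∀ φ : ℝ → ℝ, IsLowerBalancedNFunction φ γ →
      ∀ (E : Type*) [NormedAddCommGroup E] [NormedSpace ℝ E] (x y : E),
        c * shiftNF (conjNF φ) ‖x‖ ‖x - y‖ ≤
            ‖sqrtRadialMap (deriv (conjNF φ)) x - sqrtRadialMap (deriv (conjNF φ)) y‖ ^ 2 ∧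
          ‖sqrtRadialMap (deriv (conjNF φ)) x - sqrtRadialMap (deriv (conjNF φ)) y‖ ^ 2 ≤
            C * shiftNF (conjNF φ) ‖x‖ ‖x - y‖ := by
  rcases le_or_gt γ 0 with hγ | hγ
  · exact ⟨1, one_pos, 1, one_pos, fun φ hφ => absurd hφ.pos hγ.not_gt⟩
  refine ⟨(9 * 3 ^ γ⁻¹)⁻¹, by positivity, 3 * (γ⁻¹ + 2) ^ 3, by positivity,
    fun φ hφ E _ _ x y => ⟨?_, ?_⟩⟩
  · rw [inv_mul_le_iff₀ (by positivity)]
    exact hφ.powerGrowth_deriv_conjNF.shiftNF_le_mul_norm_sub_sq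
  · exact hφ.powerGrowth_deriv_conjNF.norm_sub_sq_le_mul_shiftNF

end NormedSpace

open scoped Matrix.Norms.Frobenius

theorem frobNorm_eq_norm {d n : ℕ} (P : Fin d → Fin n → ℝ) : frobNorm P = ‖Matrix.of P‖ := by
  simp only [frobNorm, Matrix.frobenius_norm_def, Matrix.of_apply, Real.sqrt_eq_rpow,
    Real.rpow_two, Real.norm_eq_abs, sq_abs]

theorem of_FstarNF {d n : ℕ} (φ : ℝ → ℝ) (P : Fin d → Fin n → ℝ) :
    Matrix.of (FstarNF φ P) = sqrtRadialMap (deriv (conjNF φ)) (Matrix.of P) := by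
  rw [FstarNF, frobNorm_eq_norm]
  rfl

/-- `|F*(P)−F*(Q)|² ∼ (φ*)_{|P|}(|P−Q|)` with constants depending only
on the characteristics `(γ₁, γ₂)` of the balanced N-function `φ`. -/
theorem Fstar_equiv_shift_conj (γ₁ γ₂ : ℝ) :
    ∃ c > (0:ℝ), ∃ C > (0:ℝ), ∀ φ : ℝ → ℝ, IsBalancedNFunction φ γ₁ γ₂ →
      ∀ d n : ℕ, 1 ≤ d → 1 ≤ n → ∀ P Q : Fin d → Fin n → ℝ,
        c * shiftNF (conjNF φ) (frobNorm P) (frobNorm (P - Q)) ≤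
            frobNorm (FstarNF φ P - FstarNF φ Q) ^ 2 ∧
          frobNorm (FstarNF φ P - FstarNF φ Q) ^ 2 ≤
            C * shiftNF (conjNF φ) (frobNorm P) (frobNorm (P - Q)) := by
  obtain ⟨c, hc, C, hC, hequiv⟩ := Fstar_equiv_shift_conj_general γ₁
  refine ⟨c, hc, C, hC, fun φ hφ d n _ _ P Q => ?_⟩
  simpa only [frobNorm_eq_norm, ← Matrix.of_sub_of, of_FstarNF] using
    hequiv φ hφ.isLowerBalancedNFunction _ (Matrix.of P) (Matrix.of Q)

end
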